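/- Let d ≥ 1 and let S be a finite subset of the unit sphere S^{d-1} ⊂ ℝ^d with |S| = n ≥ 2, and assume |⟨x,y⟩| < 1 for all x, y ∈ S with x ≠ y. Let r = max_{x,y ∈ S, x ≠ y} 2/√(1 − |⟨x,y⟩|). Let ℓ ∈ ℕ⁺ and let δ > 0 satisfy δ < 2/r². Then for every j ∈ {1, …, ℓ} there exist a positive integer D_j ≤ ⌈24 · 2^{2(ℓ−j)} · r^{6((2/3)^j − (2/3)^ℓ)} · log n / δ²⌉ and a map φ_j : S → ℝ^{D_j} all of whose coordinates lie in {−1/√(D_j), 1/√(D_j)}, such that for all x, y ∈ S, |⟨φ_j(x), φ_j(y)⟩ − f_j(⟨x, y⟩)| < δ / (2^{ℓ−j} · r^{3((2/3)^j − (2/3)^ℓ)}). -/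

import Mathlib

/-!
The levels can be treated independently of each other. A symmetric matrix indexed by `S` is called
here the correlation matrix of a random sign vector if it is `𝔼[s x * s y]` for a probability
measure on `S → {±1}`. Grothendieck's identity (`grothendieck`) shows that `f`, applied entrywise to
a Gram matrix of unit vectors, gives such a correlation matrix (`signs_of_unit`); conversely every
such correlation matrix is a Gram matrix of unit vectors in a finite-dimensional space
(`unit_of_signs`). Alternating the two, `f^[j] ⟪x, y⟫` is *exactly* the correlation matrix of a
random sign vector for every `j ≥ 1` (`signs_iterate`).

Put `ε = δ / (2^(ℓ-j) r^(3((2/3)^j - (2/3)^ℓ)))`. Averaging `D = ⌈24 log n / ε²⌉` independent copies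
of the sign vector, Hoeffding's inequality and a union bound over the pairs (`sample`) give a
deterministic choice of signs with all errors below `ε`, and `24 log n / ε²` is precisely the bound
on `D_j` in the theorem. No propagation of errors from level to level is involved.

Grothendieck's identity is reduced, through characteristic functions (`map_pair`), to the standard
Gaussian measure of the plane, where polar coordinates (`gauss_plane`) leave an integral of a
piecewise constant function of the angle (`angular`).
-/

open Real RealInnerProductSpace

/-- `f(t) = (2/π)·arcsin(t)`. -/
noncomputable def f (t : ℝ) : ℝ := (2 / Real.pi) * Real.arcsin t

section

open MeasureTheory ProbabilityTheory

/-! ### Signs and Gaussian integrals in the plane -/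

/-- The sign of a real number, with the convention that `0` has sign `1`, so that the value is
always `±1`. -/
noncomputable def sgn (t : ℝ) : ℝ := if 0 ≤ t then 1 else -1

lemma sgn_of_nonneg {t : ℝ} (h : 0 ≤ t) : sgn t = 1 := if_pos h
lemma sgn_of_neg {t : ℝ} (h : t < 0) : sgn t = -1 := if_neg (not_le.2 h)
lemma sgn_mul_of_pos {a t : ℝ} (h : 0 < a) : sgn (a * t) = sgn t := by
  simp [sgn, mul_nonneg_iff_of_pos_left h]
lemma measurable_sgn : Measurable sgn :=
  Measurable.ite measurableSet_Ici measurable_const measurable_const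

lemma integral_of_eq_const_on_Ioo {h : ℝ → ℝ} {a b c : ℝ} (hab : a ≤ b)
    (hh : ∀ x ∈ Set.Ioo a b, h x = c) :
    IntervalIntegrable h volume a b ∧ ∫ x in a..b, h x = (b - a) * c := by
  constructor
  · refine (intervalIntegrable_const (c := c)).congr_uIoo ?_
    rw [Set.uIoo_of_le hab]; exact fun x hx => (hh x hx).symm
  · rw [intervalIntegral.integral_congr_Ioo_of_le hab (g := fun _ => c) hh]
    simp

lemma angular {θ : ℝ} (h0 : 0 ≤ θ) (h1 : θ ≤ π) :
    ∫ φ in Set.Ioo (-π) π, sgn (cos φ) * sgn (cos (φ - θ)) = 2 * π - 4 * θ := by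
  have hpi := Real.pi_pos
  have hper : Function.Periodic (fun φ => sgn (cos φ) * sgn (cos (φ - θ))) (2 * π) := by
    intro φ
    have : φ + 2 * π - θ = (φ - θ) + 2 * π := by ring
    simp only [this, cos_add_two_pi]
  have hs := hper.intervalIntegral_add_eq (-π) (-(π / 2))
  rw [show -π + 2 * π = π by ring, show -(π / 2) + 2 * π = θ + π / 2 + (π - θ) by ring] at hs
  rw [← integral_Ioc_eq_integral_Ioo, ← intervalIntegral.integral_of_le (by linarith), hs]
  -- On the period from `-π/2` the integrand is constant between `-π/2`, `θ - π/2`, `π/2`,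
  -- `θ + π/2` and `3π/2`, with values `-1`, `1`, `-1`, `1`.
  obtain ⟨i1, e1⟩ := integral_of_eq_const_on_Ioo
    (h := fun φ => sgn (cos φ) * sgn (cos (φ - θ))) (a := -(π / 2))
    (b := θ - π / 2) (c := -1) (by linarith) (by
      rintro x ⟨hx1, hx2⟩
      have hc : cos (x - θ) < 0 := by
        rw [← cos_neg]; exact cos_neg_of_pi_div_two_lt_of_lt (by linarith) (by linarith)
      simp [sgn_of_nonneg (cos_pos_of_mem_Ioo ⟨by linarith, by linarith⟩ : 0 < cos x).le,
        sgn_of_neg hc])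
  obtain ⟨i2, e2⟩ := integral_of_eq_const_on_Ioo
    (h := fun φ => sgn (cos φ) * sgn (cos (φ - θ))) (a := θ - π / 2)
    (b := π / 2) (c := 1) (by linarith) (by
      rintro x ⟨hx1, hx2⟩
      simp [sgn_of_nonneg (cos_pos_of_mem_Ioo ⟨by linarith, by linarith⟩ : 0 < cos x).le,
        sgn_of_nonneg (cos_pos_of_mem_Ioo ⟨by linarith, by linarith⟩ : 0 < cos (x - θ)).le])
  obtain ⟨i3, e3⟩ := integral_of_eq_const_on_Ioo
    (h := fun φ => sgn (cos φ) * sgn (cos (φ - θ))) (a := π / 2)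
    (b := θ + π / 2) (c := -1) (by linarith) (by
      rintro x ⟨hx1, hx2⟩
      simp [sgn_of_neg (cos_neg_of_pi_div_two_lt_of_lt hx1 (by linarith)),
        sgn_of_nonneg (cos_pos_of_mem_Ioo ⟨by linarith, by linarith⟩ : 0 < cos (x - θ)).le])
  obtain ⟨i4, e4⟩ := integral_of_eq_const_on_Ioo
    (h := fun φ => sgn (cos φ) * sgn (cos (φ - θ))) (a := θ + π / 2)
    (b := θ + π / 2 + (π - θ)) (c := 1) (by linarith) (by
      rintro x ⟨hx1, hx2⟩
      simp [sgn_of_neg (cos_neg_of_pi_div_two_lt_of_lt (x := x) (by linarith) (by linarith)),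
        sgn_of_neg (cos_neg_of_pi_div_two_lt_of_lt (x := x - θ) (by linarith) (by linarith))])
  rw [← intervalIntegral.integral_add_adjacent_intervals ((i1.trans i2).trans i3) i4,
    ← intervalIntegral.integral_add_adjacent_intervals (i1.trans i2) i3,
    ← intervalIntegral.integral_add_adjacent_intervals i1 i2, e1, e2, e3, e4]
  ring

/-- Integration in polar coordinates against the standard Gaussian measure of the plane, for an
integrand that depends on the angle only. The radial factor is left unevaluated; its value `1/(2π)`
follows by taking `F = 1`. -/
lemma gauss_plane (F : ℝ × ℝ → ℝ) (G : ℝ → ℝ)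
    (hFG : ∀ ρ φ, 0 < ρ → F (ρ * cos φ, ρ * sin φ) = G φ) :
    ∫ p, F p ∂((gaussianReal 0 1).prod (gaussianReal 0 1)) =
      (∫ ρ in Set.Ioi (0 : ℝ), ρ * ((2 * π)⁻¹ * exp (-ρ ^ 2 / 2))) *
        ∫ φ in Set.Ioo (-π) π, G φ := by
  have h1 : ∫ p, F p ∂((gaussianReal 0 1).prod (gaussianReal 0 1)) =
      ∫ p : ℝ × ℝ, (2 * π)⁻¹ * exp (-(p.1 ^ 2 + p.2 ^ 2) / 2) * F p := by
    rw [gaussianReal_of_var_ne_zero _ one_ne_zero,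
      prod_withDensity (measurable_gaussianPDF _ _) (measurable_gaussianPDF _ _),
      ← Measure.volume_eq_prod,
      integral_withDensity_eq_integral_toReal_smul (by fun_prop)
        (ae_of_all _ fun _ => ENNReal.mul_lt_top gaussianPDF_lt_top gaussianPDF_lt_top)]
    congr 1 with p
    simp only [ENNReal.toReal_mul, toReal_gaussianPDF, smul_eq_mul, gaussianPDFReal]
    congr 1
    rw [mul_mul_mul_comm, ← exp_add, ← mul_inv]
    simp only [NNReal.coe_one, mul_one, sub_zero]
    rw [mul_self_sqrt (by positivity)]
    congr 2; ring
  rw [h1, ← integral_comp_polarCoord_symm, ← setIntegral_prod_mul, polarCoord_target,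
    ← Measure.volume_eq_prod]
  refine setIntegral_congr_fun (measurableSet_Ioi.prod measurableSet_Ioo) ?_
  rintro ⟨ρ, φ⟩ ⟨h, -⟩
  simp only [polarCoord_symm_apply, smul_eq_mul]
  rw [hFG _ _ h, show (ρ * cos φ) ^ 2 + (ρ * sin φ) ^ 2 = ρ ^ 2 by
    linear_combination ρ ^ 2 * sin_sq_add_cos_sq φ]
  ring

lemma plane_sign {θ : ℝ} (h0 : 0 ≤ θ) (h1 : θ ≤ π) :
    ∫ p : ℝ × ℝ, sgn p.1 * sgn (cos θ * p.1 + sin θ * p.2)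
      ∂((gaussianReal 0 1).prod (gaussianReal 0 1)) = 1 - 2 * θ / π := by
  have hpi := Real.pi_pos
  have hone := gauss_plane (fun _ => 1) (fun _ => 1) (fun _ _ _ => rfl)
  rw [gauss_plane _ (fun φ => sgn (cos φ) * sgn (cos (φ - θ))), angular h0 h1]
  · generalize ∫ ρ in Set.Ioi (0 : ℝ), ρ * ((2 * π)⁻¹ * exp (-ρ ^ 2 / 2)) = R at hone ⊢
    have hR : 1 = R * (π + π) := by simpa [hpi.le] using hone
    rw [eq_div_of_mul_eq (by positivity) hR.symm]
    field_simp; ring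
  · intro ρ φ hρ
    dsimp only
    rw [sgn_mul_of_pos hρ, show cos θ * (ρ * cos φ) + sin θ * (ρ * sin φ) = ρ * cos (φ - θ) by
      rw [cos_sub]; ring, sgn_mul_of_pos hρ]

/-! ### Grothendieck's identity -/

lemma charFunDual_gauss (K : StrongDual ℝ ℝ) :
    charFunDual (gaussianReal 0 1) K = Complex.exp (-((K 1 : ℝ) : ℂ) ^ 2 / 2) := by
  have hK : ∀ x, K x = K 1 * x := fun x => by
    have := K.map_smul x 1
    simpa [mul_comm] using this
  have := charFun_gaussianReal (μ := 0) (v := 1) (K 1)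
  rw [charFun_apply_real] at this
  rw [charFunDual_apply]
  have hint : ∫ x, Complex.exp (K x * Complex.I) ∂(gaussianReal 0 1) =
      ∫ x, Complex.exp (K 1 * x * Complex.I) ∂(gaussianReal 0 1) := by
    congr 1 with x
    rw [hK x, Complex.ofReal_mul]
  rw [hint, this]
  simp [neg_div]

/-- The joint law of two one-dimensional marginals of the standard Gaussian measure depends only on
the angle between the two directions; the characteristic functions agree. -/
lemma map_pair {E : Type*} [NormedAddCommGroup E] [InnerProductSpace ℝ E] [FiniteDimensional ℝ E]
    [MeasurableSpace E] [BorelSpace E] (u v : E) (hu : ‖u‖ = 1) (hv : ‖v‖ = 1) (θ : ℝ)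
    (hθ : ⟪u, v⟫ = cos θ) :
    (stdGaussian E).map (fun g => ((⟪u, g⟫ : ℝ), (⟪v, g⟫ : ℝ))) =
      ((gaussianReal 0 1).prod (gaussianReal 0 1)).map
        (fun p : ℝ × ℝ => (p.1, cos θ * p.1 + sin θ * p.2)) := by
  let L : E →L[ℝ] ℝ × ℝ := (innerSL ℝ u).prod (innerSL ℝ v)
  let M : ℝ × ℝ →L[ℝ] ℝ × ℝ := (ContinuousLinearMap.fst ℝ ℝ ℝ).prod
    (cos θ • ContinuousLinearMap.fst ℝ ℝ ℝ + sin θ • ContinuousLinearMap.snd ℝ ℝ ℝ)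
  change (stdGaussian E).map L = ((gaussianReal 0 1).prod (gaussianReal 0 1)).map M
  apply Measure.ext_of_charFunDual
  ext T
  have hT : ∀ x y : ℝ, T (x, y) = x * T (1, 0) + y * T (0, 1) := by
    intro x y
    have : ((x, y) : ℝ × ℝ) = x • (1, 0) + y • (0, 1) := by simp
    rw [this, map_add, map_smul, map_smul, smul_eq_mul, smul_eq_mul]
  have hL : T.comp L = innerSL ℝ (T (1, 0) • u + T (0, 1) • v) := by
    ext g
    simp [L, hT ⟪u, g⟫, mul_comm]
  have hn : ‖T (1, 0) • u + T (0, 1) • v‖ ^ 2 =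
      (T (1, 0) + cos θ * T (0, 1)) ^ 2 + (sin θ * T (0, 1)) ^ 2 := by
    rw [norm_add_sq_real, norm_smul, norm_smul, hu, hv, inner_smul_left, inner_smul_right, hθ]
    simp
    linear_combination (-T (0,1) ^ 2) * sin_sq_add_cos_sq θ
  rw [charFunDual_map, charFunDual_map, charFunDual_stdGaussian, hL, innerSL_apply_norm,
    ← Complex.ofReal_pow, hn, charFunDual_prod]
  rw [charFunDual_gauss, charFunDual_gauss, ← Complex.exp_add]
  have e1 : ((T.comp M).comp (.inl ℝ ℝ ℝ)) 1 = T (1, 0) + cos θ * T (0, 1) := by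
    simpa [M] using hT 1 (cos θ)
  have e2 : ((T.comp M).comp (.inr ℝ ℝ ℝ)) 1 = sin θ * T (0, 1) := by
    simpa [M] using hT 0 (sin θ)
  rw [e1, e2]
  congr 1
  push_cast
  ring

/-- **Grothendieck's identity** (Sheppard's formula): for unit vectors `u`, `v` and a standard
Gaussian vector `g`, the signs of `⟪u, g⟫` and `⟪v, g⟫` have correlation `(2/π) arcsin ⟪u, v⟫`. -/
lemma grothendieck {E : Type*} [NormedAddCommGroup E] [InnerProductSpace ℝ E]
    [FiniteDimensional ℝ E] [MeasurableSpace E] [BorelSpace E]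
    (u v : E) (hu : ‖u‖ = 1) (hv : ‖v‖ = 1) :
    ∫ g, sgn ⟪u, g⟫ * sgn ⟪v, g⟫ ∂(stdGaussian E) = f ⟪u, v⟫ := by
  have hpi := Real.pi_pos
  have hb := abs_le.1 (abs_real_inner_le_norm u v)
  rw [hu, hv, mul_one] at hb
  have hθ := cos_arccos hb.1 hb.2
  have hm : Measurable fun p : ℝ × ℝ => sgn p.1 * sgn p.2 :=
    (measurable_sgn.comp measurable_fst).mul (measurable_sgn.comp measurable_snd)
  have h1 := integral_map (μ := stdGaussian E) (φ := fun g => ((⟪u, g⟫ : ℝ), (⟪v, g⟫ : ℝ)))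
    (by fun_prop) hm.aestronglyMeasurable
  rw [map_pair u v hu hv _ hθ.symm, integral_map (by fun_prop) hm.aestronglyMeasurable,
    plane_sign (arccos_nonneg _) (arccos_le_pi _)] at h1
  rw [← h1, f, arccos]
  field_simp; ring

/-! ### Iterating `f` on correlation matrices of random signs -/

/-- A Boolean read as a sign: `true` is `1` and `false` is `-1`. -/
def bsgn (b : Bool) : ℝ := if b then 1 else -1

lemma bsgn_sq (b : Bool) : bsgn b * bsgn b = 1 := by cases b <;> simp [bsgn]
lemma bsgn_mul_mem (b c : Bool) : bsgn b * bsgn c ∈ Set.Icc (-1 : ℝ) 1 := by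
  cases b <;> cases c <;> simp [bsgn]

/-- Random hyperplane rounding: `f` of a Gram matrix of unit vectors is the correlation matrix of a
random sign vector. -/
lemma signs_of_unit {T E : Type*} [Fintype T] [NormedAddCommGroup E] [InnerProductSpace ℝ E]
    [FiniteDimensional ℝ E] (u : T → E) (hu : ∀ x, ‖u x‖ = 1) :
    ∃ P : Measure (T → Bool), IsProbabilityMeasure P ∧
      ∀ x y, ∫ s, bsgn (s x) * bsgn (s y) ∂P = f ⟪u x, u y⟫ := by
  borelize E
  let σ : E → T → Bool := fun g x => decide (0 ≤ (⟪u x, g⟫ : ℝ))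
  have hσ : Measurable σ := by
    refine measurable_pi_lambda _ fun x => measurable_to_bool ?_
    have : Set.preimage (fun g => σ g x) {true} = {g | 0 ≤ (⟪u x, g⟫ : ℝ)} := by ext; simp [σ]
    rw [this]
    exact measurableSet_le measurable_const (by fun_prop)
  refine ⟨(stdGaussian E).map σ, Measure.isProbabilityMeasure_map hσ.aemeasurable, fun x y => ?_⟩
  rw [integral_map hσ.aemeasurable (measurable_of_countable _).aestronglyMeasurable,
    ← grothendieck _ _ (hu x) (hu y)]
  simp [σ, bsgn, sgn]

/-- The correlation matrix of a random sign vector is a Gram matrix of unit vectors, namely of the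
sign functions themselves in `L²(P)`, realised as a Euclidean space with weights `√P{s}`. -/
lemma unit_of_signs {T : Type*} [Fintype T] [DecidableEq T]
    (P : Measure (T → Bool)) [IsProbabilityMeasure P] :
    ∃ u : T → EuclideanSpace ℝ (T → Bool), (∀ x, ‖u x‖ = 1) ∧
      ∀ x y, ⟪u x, u y⟫ = ∫ s, bsgn (s x) * bsgn (s y) ∂P := by
  let u : T → EuclideanSpace ℝ (T → Bool) := fun x =>
    WithLp.toLp 2 fun s => √(P.real {s}) * bsgn (s x)
  have hu : ∀ x y, ⟪u x, u y⟫ = ∫ s, bsgn (s x) * bsgn (s y) ∂P := by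
    intro x y
    rw [integral_fintype .of_finite, PiLp.inner_apply]
    refine Finset.sum_congr rfl fun s _ => ?_
    have := mul_self_sqrt (measureReal_nonneg (μ := P) (s := {s}))
    simp only [u, RCLike.inner_apply, conj_trivial, smul_eq_mul]
    linear_combination (bsgn (s x) * bsgn (s y)) * this
  refine ⟨u, fun x => ?_, hu⟩
  have h : ‖u x‖ ^ 2 = 1 := by
    rw [← real_inner_self_eq_norm_sq, hu]
    simp [bsgn_sq]
  exact (pow_eq_one_iff_of_nonneg (norm_nonneg _) two_ne_zero).1 h

lemma signs_iterate {T E : Type*} [Fintype T] [NormedAddCommGroup E] [InnerProductSpace ℝ E]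
    [FiniteDimensional ℝ E] (u : T → E) (hu : ∀ x, ‖u x‖ = 1) (j : ℕ) :
    ∃ P : Measure (T → Bool), IsProbabilityMeasure P ∧
      ∀ x y, ∫ s, bsgn (s x) * bsgn (s y) ∂P = f^[j + 1] ⟪u x, u y⟫ := by
  classical
  induction j with
  | zero => simpa using signs_of_unit u hu
  | succ j ih =>
    obtain ⟨P, hP, h⟩ := ih
    obtain ⟨w, hw, hwi⟩ := unit_of_signs P
    obtain ⟨Q, hQ, hQi⟩ := signs_of_unit w hw
    refine ⟨Q, hQ, fun x y => ?_⟩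
    rw [hQi, hwi, h, Function.iterate_succ_apply' f (j + 1)]

/-! ### Sampling -/

/-- By Hoeffding's inequality and a union bound over the ordered pairs `(x, y)`, some `D` samples of
a random sign vector have empirical correlations within `ε` of the true ones. -/
lemma sample {T : Type*} [Fintype T] (P : Measure (T → Bool)) [IsProbabilityMeasure P]
    {ε : ℝ} (hε : 0 < ε) (D : ℕ) (hD : 0 < D)
    (hbig : (Fintype.card T : ℝ) ^ 2 * (2 * exp (-(D * ε ^ 2 / 2))) < 1) :
    ∃ ω : Fin D → T → Bool, ∀ x y,
      |(∑ i, bsgn (ω i x) * bsgn (ω i y)) / D - ∫ s, bsgn (s x) * bsgn (s y) ∂P| < ε := by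
  have hD' : (0 : ℝ) < D := by exact_mod_cast hD
  let K : T → T → ℝ := fun x y => ∫ s, bsgn (s x) * bsgn (s y) ∂P
  let Y : T → T → (Fin D → T → Bool) → ℝ := fun x y ω =>
    ∑ i, (bsgn (ω i x) * bsgn (ω i y) - K x y)
  let μ : Measure (Fin D → T → Bool) := Measure.pi fun _ => P
  have hsub : ∀ x y, HasSubgaussianMGF (Y x y) D μ := by
    intro x y
    have h1 : HasSubgaussianMGF (fun s : T → Bool => bsgn (s x) * bsgn (s y) - K x y) 1 P := by
      have := hasSubgaussianMGF_of_mem_Icc (μ := P) (a := -1) (b := 1)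
        (X := fun s : T → Bool => bsgn (s x) * bsgn (s y))
        (measurable_of_countable _).aemeasurable (ae_of_all _ fun s => bsgn_mul_mem _ _)
      convert this using 1
      rw [show (1 : ℝ) - -1 = 2 by norm_num]
      simp
    have h2 : ∀ i : Fin D, HasSubgaussianMGF
        (fun ω : Fin D → T → Bool => bsgn (ω i x) * bsgn (ω i y) - K x y) 1 μ := by
      intro i
      have hmp := measurePreserving_eval (fun _ : Fin D => P) i
      refine HasSubgaussianMGF.of_map (Y := fun ω : Fin D → T → Bool => ω i)
        (X := fun s : T → Bool => bsgn (s x) * bsgn (s y) - K x y)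
        hmp.measurable.aemeasurable ?_
      rw [hmp.map_eq]; exact h1
    have hind : iIndepFun
        (fun i (ω : Fin D → T → Bool) => bsgn (ω i x) * bsgn (ω i y) - K x y) μ :=
      iIndepFun_pi (μ := fun _ : Fin D => P)
        (X := fun _ (s : T → Bool) => bsgn (s x) * bsgn (s y) - K x y)
        (fun _ => (measurable_of_countable _).aemeasurable)
    have := HasSubgaussianMGF.sum_of_iIndepFun hind (c := fun _ => 1) (s := Finset.univ)
      (fun i _ => h2 i)
    simpa only [Finset.sum_const, Finset.card_univ, Fintype.card_fin, nsmul_eq_mul,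
      mul_one] using this
  -- `B p` is the event that the pair `p` is badly approximated.
  let B : T × T → Set (Fin D → T → Bool) := fun p => {ω | D * ε ≤ |Y p.1 p.2 ω|}
  have hB : ∀ p, μ.real (B p) ≤ 2 * exp (-(D * ε ^ 2 / 2)) := by
    rintro ⟨x, y⟩
    have e : -(D * ε) ^ 2 / (2 * ((D : NNReal) : ℝ)) = -(D * ε ^ 2 / 2) := by
      simp only [NNReal.coe_natCast]; field_simp
    have a1 := (hsub x y).measure_ge_le (ε := D * ε) (by positivity)
    have a2 := (hsub x y).neg.measure_ge_le (ε := D * ε) (by positivity)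
    rw [e] at a1 a2
    calc μ.real (B (x, y)) ≤ μ.real ({ω | D * ε ≤ Y x y ω} ∪ {ω | D * ε ≤ (-Y x y) ω}) := by
          refine measureReal_mono (fun ω hω => ?_)
          exact le_abs.1 (show D * ε ≤ |Y x y ω| from hω)
      _ ≤ _ := measureReal_union_le _ _
      _ ≤ _ := by linarith
  have hU : μ.real (⋃ p, B p) < 1 := by
    calc μ.real (⋃ p, B p) ≤ ∑ p, μ.real (B p) := measureReal_iUnion_fintype_le _
      _ ≤ ∑ p : T × T, 2 * exp (-(D * ε ^ 2 / 2)) := Finset.sum_le_sum fun p _ => hB p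
      _ < 1 := by simpa [sq] using hbig
  obtain ⟨ω, hω⟩ : ∃ ω, ω ∉ ⋃ p, B p := by
    by_contra! h
    rw [Set.eq_univ_of_forall h] at hU
    simp [μ] at hU
  refine ⟨ω, fun x y => ?_⟩
  have h : |Y x y ω| < D * ε := by
    by_contra! h
    exact hω (Set.mem_iUnion.2 ⟨(x, y), h⟩)
  have hY : (∑ i, bsgn (ω i x) * bsgn (ω i y)) / D - K x y = Y x y ω / D := by
    simp only [Y, Finset.sum_sub_distrib, Finset.sum_const, Finset.card_univ, Fintype.card_fin,
      nsmul_eq_mul]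
    field_simp
  change |_ - K x y| < ε
  rw [hY, abs_div, abs_of_pos hD', div_lt_iff₀ hD']
  linarith

/-- The sketching statement for a single level and an arbitrary accuracy `ε`: `24 log |S| / ε²`
signs suffice to approximate `f^[j + 1] ⟪x, y⟫` within `ε`. -/
lemma embed {d : ℕ} (S : Finset (EuclideanSpace ℝ (Fin d))) (hS : ∀ x ∈ S, ‖x‖ = 1)
    (hn : 2 ≤ S.card) (j : ℕ) {ε : ℝ} (hε : 0 < ε) (D : ℕ)
    (hD : 24 * log S.card / ε ^ 2 ≤ D) :
    ∃ φ : EuclideanSpace ℝ (Fin d) → EuclideanSpace ℝ (Fin D),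
      (∀ x ∈ S, ∀ i, φ x i = 1 / √D ∨ φ x i = -(1 / √D)) ∧
      ∀ x ∈ S, ∀ y ∈ S, |⟪φ x, φ y⟫ - f^[j + 1] ⟪x, y⟫| < ε := by
  classical
  have hn' : (2 : ℝ) ≤ S.card := by exact_mod_cast hn
  have hlog : 0 < log S.card := log_pos (by linarith)
  have hD0 : (0 : ℝ) < D := lt_of_lt_of_le (by positivity) hD
  obtain ⟨P, hP, hPi⟩ := signs_iterate (fun x : S => (x : EuclideanSpace ℝ (Fin d)))
    (fun x => hS x x.2) j
  obtain ⟨ω, hω⟩ := sample P hε D (by exact_mod_cast hD0) (by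
    rw [Fintype.card_coe]
    have h1 : 4 * log S.card ≤ D * ε ^ 2 / 2 := by
      rw [div_le_iff₀ (by positivity)] at hD
      linarith
    have h2 : exp (-(D * ε ^ 2 / 2)) ≤ ((S.card : ℝ) ^ 4)⁻¹ := by
      rw [← exp_log (show (0 : ℝ) < (S.card : ℝ) ^ 4 by positivity), ← exp_neg, log_pow]
      exact exp_le_exp.2 (by push_cast; linarith)
    calc (S.card : ℝ) ^ 2 * (2 * exp (-(D * ε ^ 2 / 2)))
        ≤ (S.card : ℝ) ^ 2 * (2 * ((S.card : ℝ) ^ 4)⁻¹) := by gcongr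
      _ = 2 / (S.card : ℝ) ^ 2 := by field_simp
      _ < 1 := by rw [div_lt_one (by positivity)]; nlinarith)
  refine ⟨fun x => if hx : x ∈ S then WithLp.toLp 2 fun i => bsgn (ω i ⟨x, hx⟩) * (1 / √D) else 0,
    fun x hx i => ?_, fun x hx y hy => ?_⟩
  · simp only [hx, dite_true]
    cases ω i ⟨x, hx⟩ <;> simp [bsgn]
  · have := hω ⟨x, hx⟩ ⟨y, hy⟩
    rw [hPi] at this
    convert this using 3
    simp only [hx, hy, dite_true, PiLp.inner_apply, RCLike.inner_apply, conj_trivial]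
    rw [Finset.sum_div]
    refine Finset.sum_congr rfl fun i _ => ?_
    have hs : √(D : ℝ) * √D = D := mul_self_sqrt hD0.le
    have hs' : 1 / √(D : ℝ) * (1 / √D) = 1 / D := by
      rw [div_mul_div_comm, hs, one_mul]
    linear_combination (bsgn (ω i ⟨x, hx⟩) * bsgn (ω i ⟨y, hy⟩)) * hs'

end

/-- For a set `S` of `n ≥ 2` unit vectors in `ℝ^d` with pairwise `|⟨x,y⟩| < 1`,
`r = max_{x ≠ y} 2/√(1 − |⟨x,y⟩|)`, `ℓ ≥ 1`, and `0 < δ < 2/r²`, for every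
`j ∈ {1, …, ℓ}` there are a positive integer
`D_j ≤ ⌈24·2^{2(ℓ−j)}·r^{6((2/3)^j−(2/3)^ℓ)}·log n / δ²⌉` and a map
`φ_j : S → D_j^{-1/2}{−1,1}^{D_j}` with
`|⟨φ_j(x), φ_j(y)⟩ − f_j(⟨x,y⟩)| < δ / (2^{ℓ−j}·r^{3((2/3)^j−(2/3)^ℓ)})`
for all `x, y ∈ S`. -/
theorem sketch_iterate_f_all_levels (d n : ℕ) (hd : 1 ≤ d)
    (S : Finset (EuclideanSpace ℝ (Fin d))) (hS : ∀ x ∈ S, ‖x‖ = 1)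
    (hcard : S.card = n) (hn : 2 ≤ n)
    (hip : ∀ x ∈ S, ∀ y ∈ S, x ≠ y → |⟪x, y⟫| < 1)
    (r : ℝ)
    (hr : IsGreatest {t : ℝ | ∃ x ∈ S, ∃ y ∈ S, x ≠ y ∧
            t = 2 / Real.sqrt (1 - |⟪x, y⟫|)} r)
    (ℓ : ℕ) (hℓ : 1 ≤ ℓ) (δ : ℝ) (hδ0 : 0 < δ) (hδ : δ < 2 / r ^ 2) :
    ∀ j : ℕ, 1 ≤ j → j ≤ ℓ →
      ∃ D : ℕ, 0 < D ∧
        (D : ℤ) ≤ ⌈24 * 2 ^ (2 * (ℓ - j)) *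
            r ^ (6 * ((2 / 3 : ℝ) ^ j - (2 / 3 : ℝ) ^ ℓ)) * Real.log n / δ ^ 2⌉ ∧
        ∃ φ : EuclideanSpace ℝ (Fin d) → EuclideanSpace ℝ (Fin D),
          (∀ x ∈ S, ∀ i, φ x i = 1 / Real.sqrt D ∨ φ x i = -(1 / Real.sqrt D)) ∧
          ∀ x ∈ S, ∀ y ∈ S,
            |⟪φ x, φ y⟫ - f^[j] ⟪x, y⟫| <
              δ / (2 ^ (ℓ - j) * r ^ (3 * ((2 / 3 : ℝ) ^ j - (2 / 3 : ℝ) ^ ℓ))) := by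
  have hr0 : 0 < r := by
    obtain ⟨⟨x, hx, y, hy, hxy, rfl⟩, -⟩ := hr
    have := hip x hx y hy hxy
    exact div_pos two_pos (sqrt_pos.2 (by linarith))
  intro j hj _
  obtain ⟨k, rfl⟩ : ∃ k, j = k + 1 := ⟨j - 1, by omega⟩
  subst hcard
  have hlog : 0 < log S.card := log_pos (by exact_mod_cast hn)
  set a : ℝ := (2 / 3 : ℝ) ^ (k + 1) - (2 / 3 : ℝ) ^ ℓ
  set m : ℕ := ℓ - (k + 1)
  -- The required accuracy; the bound on `D` is `24 log n / ε²`.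
  set ε : ℝ := δ / (2 ^ m * r ^ (3 * a)) with hεdef
  have hra : 0 < r ^ (3 * a) := rpow_pos_of_pos hr0 _
  have hε : 0 < ε := by positivity
  have hX : 24 * 2 ^ (2 * m) * r ^ (6 * a) * log S.card / δ ^ 2 = 24 * log S.card / ε ^ 2 := by
    rw [show 6 * a = 3 * a + 3 * a by ring, rpow_add hr0, pow_mul', hεdef]
    field_simp
  rw [hX]
  have hXpos : 0 < 24 * log S.card / ε ^ 2 := by positivity
  refine ⟨⌈24 * log S.card / ε ^ 2⌉₊, Nat.ceil_pos.2 hXpos, ?_,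
    embed S hS hn k hε _ (Nat.le_ceil _)⟩
  rw [Int.natCast_ceil_eq_ceil hXpos.le]
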